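/- arXiv:2012.04087 — 5 statements merged into one kernel-verified Lean document; each statement's English description precedes it below -/
import Mathlib

section
/- Let A ∈ ℂ^{L×N} be a generalized incidence matrix of a connected network. Then rank(A) ≥ |N| − 1; equivalently, dim Null(A) ≤ 1. Moreover, if rank(A) = |N| − 1 (i.e., A is not full column rank), then every nonzero vector x ∈ Null(A) has all of its entries nonzero. -/
open Matrix

/-!
A vector `x` in the kernel satisfies `x i = a * x k` along every branch, and `a ≠ 0`, so vanishing
of `x` at one node propagates to the whole connected network. Hence evaluation at any single node
is injective on the kernel, which therefore has rank at most one.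
-/

theorem rank_add_finrank_ker_mulVecLin {R m n : Type*} [CommRing R] [IsDomain R] [Fintype n]
    (A : Matrix m n R) :
    A.rank + Module.finrank R (LinearMap.ker A.mulVecLin) = Fintype.card n := by
  rw [Matrix.rank, ← A.mulVecLin.quotKerEquivRange.finrank_eq,
    Submodule.finrank_quotient_add_finrank, Module.finrank_fintype_fun_eq_card]

theorem finrank_le_one_of_apply_eq_zero_imp_eq_zero {R n : Type*} [Ring R] [StrongRankCondition R]
    (V : Submodule R (n → R)) (i : n) (hV : ∀ x ∈ V, x i = 0 → x = 0) :
    Module.finrank R V ≤ 1 := by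
  let evalAt : V →ₗ[R] R := (LinearMap.proj i).comp V.subtype
  have evalAt_injective : Function.Injective evalAt :=
    (injective_iff_map_eq_zero evalAt).mpr fun x hx => Subtype.ext (hV x x.2 hx)
  calc Module.finrank R V
    _ ≤ Module.finrank R R := LinearMap.finrank_le_finrank_of_injective evalAt_injective
    _ = 1 := Module.finrank_self R

theorem iff_of_reachable_of_forall_adj {V : Type*} {G : SimpleGraph V} {p : V → Prop}
    (hp : ∀ u v, G.Adj u v → (p u ↔ p v)) {u v : V} (huv : G.Reachable u v) : p u ↔ p v := by
  obtain ⟨w⟩ := huv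
  induction w with
  | nil => rfl
  | cons hadj _ ih => exact (hp _ _ hadj).trans ih

/-- The undirected graph of the network whose branch `l` joins the nodes `e₁ l` and `e₂ l`.
Parallel branches give one edge, and a branch with equal ends gives none. -/
def branchGraph {L N : Type*} (e₁ e₂ : L → N) : SimpleGraph N :=
  SimpleGraph.fromRel fun i k => ∃ l, e₁ l = i ∧ e₂ l = k

/-- The generalized incidence matrix of the network whose branch `l` goes from `e₁ l` to `e₂ l`
with tap ratio `a l`. As rows are differences, a branch with equal ends is allowed and has the
single entry `1 - a l`. -/
def tapIncMatrix {R L N : Type*} [Ring R] [DecidableEq N] (e₁ e₂ : L → N) (a : L → R) :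
    Matrix L N R :=
  Matrix.of fun l => Pi.single (e₁ l) 1 - Pi.single (e₂ l) (a l)

namespace tapIncMatrix

variable {R L N : Type*} [DecidableEq N] {e₁ e₂ : L → N}

theorem eq_of_apply_eq_ite [Ring R] {a : L → R} (hends : ∀ l, e₁ l ≠ e₂ l)
    {A : Matrix L N R}
    (hA : ∀ l j, A l j = if j = e₁ l then 1 else if j = e₂ l then -a l else 0) :
    A = tapIncMatrix e₁ e₂ a := by
  ext l j
  simp only [hA, tapIncMatrix, Matrix.of_apply, Pi.sub_apply, Pi.single_apply]
  by_cases h₁ : j = e₁ l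
  · simp [h₁, hends l]
  · simp only [if_neg h₁, zero_sub, neg_ite, neg_zero]

theorem mulVec_apply [Fintype N] [Ring R] (e₁ e₂ : L → N) (a : L → R) (x : N → R)
    (l : L) : (tapIncMatrix e₁ e₂ a *ᵥ x) l = x (e₁ l) - a l * x (e₂ l) :=
  calc (tapIncMatrix e₁ e₂ a *ᵥ x) l
    _ = (Pi.single (e₁ l) 1 - Pi.single (e₂ l) (a l)) ⬝ᵥ x := rfl
    _ = x (e₁ l) - a l * x (e₂ l) := by
      rw [sub_dotProduct, single_one_dotProduct, single_dotProduct]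

variable [Fintype N] {a : L → R} {x : N → R}

theorem apply_eq_mul_apply_of_mulVec_eq_zero [Ring R]
    (hx : tapIncMatrix e₁ e₂ a *ᵥ x = 0) (l : L) : x (e₁ l) = a l * x (e₂ l) := by
  rw [← sub_eq_zero, ← mulVec_apply, hx, Pi.zero_apply]

theorem apply_eq_zero_iff_of_branchGraph_adj [Ring R] [NoZeroDivisors R] (ha : ∀ l, a l ≠ 0)
    (hx : tapIncMatrix e₁ e₂ a *ᵥ x = 0) {i k : N} (hik : (branchGraph e₁ e₂).Adj i k) :
    x i = 0 ↔ x k = 0 := by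
  have ends_iff (l : L) : x (e₁ l) = 0 ↔ x (e₂ l) = 0 := by
    rw [apply_eq_mul_apply_of_mulVec_eq_zero hx, mul_eq_zero_iff_left (ha l)]
  obtain ⟨-, ⟨l, rfl, rfl⟩ | ⟨l, rfl, rfl⟩⟩ := (SimpleGraph.fromRel_adj _ _ _).mp hik
  · exact ends_iff l
  · exact (ends_iff l).symm

theorem eq_zero_of_apply_eq_zero [Ring R] [NoZeroDivisors R] (ha : ∀ l, a l ≠ 0)
    (hconn : (branchGraph e₁ e₂).Preconnected) (hx : tapIncMatrix e₁ e₂ a *ᵥ x = 0)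
    {i : N} (hi : x i = 0) : x = 0 :=
  funext fun k => (iff_of_reachable_of_forall_adj (p := fun j => x j = 0)
    (fun _ _ => apply_eq_zero_iff_of_branchGraph_adj ha hx) (hconn i k)).mp hi

theorem finrank_ker_le_one [CommRing R] [IsDomain R] (ha : ∀ l, a l ≠ 0)
    (hconn : (branchGraph e₁ e₂).Connected) :
    Module.finrank R (LinearMap.ker (tapIncMatrix e₁ e₂ a).mulVecLin) ≤ 1 := by
  obtain ⟨i⟩ := hconn.nonempty
  exact finrank_le_one_of_apply_eq_zero_imp_eq_zero _ i fun _ hx =>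
    eq_zero_of_apply_eq_zero ha hconn.preconnected hx

end tapIncMatrix

theorem stmt5_general {R L N : Type*} [CommRing R] [IsDomain R] [Fintype N] [DecidableEq N]
    (e₁ e₂ : L → N) (a : L → R) (ha : ∀ l, a l ≠ 0) (hconn : (branchGraph e₁ e₂).Connected) :
    Fintype.card N - 1 ≤ (tapIncMatrix e₁ e₂ a).rank ∧
    Module.finrank R (LinearMap.ker (tapIncMatrix e₁ e₂ a).mulVecLin) ≤ 1 ∧
    ∀ x : N → R, tapIncMatrix e₁ e₂ a *ᵥ x = 0 → x ≠ 0 → ∀ i, x i ≠ 0 := by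
  have nullity_le_one := tapIncMatrix.finrank_ker_le_one ha hconn
  have rank_nullity := rank_add_finrank_ker_mulVecLin (tapIncMatrix e₁ e₂ a)
  exact ⟨by lia, nullity_le_one, fun x hx hx0 i hi =>
    hx0 (tapIncMatrix.eq_zero_of_apply_eq_zero ha hconn.preconnected hx hi)⟩

/-- Let `A ∈ ℂ^{L×N}` be a generalized incidence matrix of a connected
network (row `l` has entry `1` in column `e1 l`, entry `-a l` in column `e2 l`, `0`
elsewhere, with `e1 l ≠ e2 l` and `a l ≠ 0`). Then `rank A ≥ |N| - 1`
(equivalently, `dim Null(A) ≤ 1`); moreover, if `rank A = |N| - 1` (i.e. `A` is not of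
full column rank), then every nonzero vector in `Null(A)` has all entries nonzero. -/
theorem stmt5 {L N : Type*} [Fintype L] [Fintype N] [DecidableEq N]
    [Nonempty L] [Nonempty N]
    (e1 e2 : L → N) (a : L → ℂ)
    (hends : ∀ l, e1 l ≠ e2 l) (ha : ∀ l, a l ≠ 0)
    (A : Matrix L N ℂ)
    (hA : ∀ l j, A l j = if j = e1 l then 1 else if j = e2 l then -(a l) else 0)
    (hconn : (SimpleGraph.fromRel fun i k => ∃ l, e1 l = i ∧ e2 l = k).Connected) :
    Fintype.card N - 1 ≤ A.rank ∧
    Module.finrank ℂ (LinearMap.ker A.mulVecLin) ≤ 1 ∧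
    (A.rank = Fintype.card N - 1 →
      ∀ x : N → ℂ, A.mulVec x = 0 → x ≠ 0 → ∀ i, x i ≠ 0) := by
  obtain rfl := tapIncMatrix.eq_of_apply_eq_ite hends hA
  exact (stmt5_general e1 e2 a ha hconn).imp_right (And.imp_right fun h _ => h)
end

section
/- Let A ∈ ℂ^{L×N} be a generalized incidence matrix of a connected network with |L| = |N| − 1 (so the network graph is a tree). Then rank(A) = |N| − 1, and Null(A) is one-dimensional, spanned by a vector all of whose entries are nonzero. -/
open Matrix

/-! A null vector `x` satisfies `x i = a * x k` across every branch, and since the tap ratios are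
nonzero, a zero entry of `x` propagates along branches; by connectedness, a null vector with a zero
entry is zero. Hence any two null vectors are proportional, being determined by a single entry, and
a nonzero one, which exists because there are fewer branches than nodes, has no zero entry. -/

section LinearAlgebra

variable {ι m n K : Type*}

theorem eq_span_singleton_of_apply_eq_zero_imp [DivisionRing K] {V : Submodule K (ι → K)}
    (hV : ∀ x ∈ V, ∀ i, x i = 0 → x = 0) {v : ι → K} (hv : v ∈ V) (hv0 : v ≠ 0) :
    V = Submodule.span K {v} := by
  obtain ⟨i, hi⟩ := Function.ne_iff.mp hv0
  refine le_antisymm (fun x hx ↦ ?_) ((Submodule.span_singleton_le_iff_mem v V).mpr hv)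
  have hmem : (x i / v i) • v - x ∈ V := V.sub_mem (V.smul_mem _ hv) hx
  have hzero : ((x i / v i) • v - x) i = 0 := by simp [div_mul_cancel₀ _ hi]
  exact Submodule.mem_span_singleton.mpr ⟨x i / v i, sub_eq_zero.mp (hV _ hmem i hzero)⟩

theorem rank_add_one_of_ker_mulVecLin_eq_span_singleton [Field K] [Fintype n]
    {M : Matrix m n K} {v : n → K} (hv : v ≠ 0)
    (hker : LinearMap.ker M.mulVecLin = Submodule.span K {v}) :
    M.rank + 1 = Fintype.card n := by
  rw [← finrank_span_singleton (K := K) hv, ← hker, Matrix.rank,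
    LinearMap.finrank_range_add_finrank_ker, Module.finrank_fintype_fun_eq_card]

end LinearAlgebra

/-- The graph of a network whose branch `l` joins the nodes `e1 l` and `e2 l`. Parallel branches
give the same edge and self-loops none; neither affects connectedness. -/
def networkGraph {L N : Type*} (e1 e2 : L → N) : SimpleGraph N :=
  SimpleGraph.fromRel fun i k ↦ ∃ l, e1 l = i ∧ e2 l = k

/-- The generalized incidence matrix of a network whose branch `l` goes from `e1 l` to `e2 l` with
tap ratio `a l`. As a difference of unit vectors, row `l` always sends `x` to
`x (e1 l) - a l * x (e2 l)`; on a self-loop its only entry is `1 - a l`. -/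
def generalizedIncidenceMatrix {L N R : Type*} [Ring R] [DecidableEq N]
    (e1 e2 : L → N) (a : L → R) : Matrix L N R :=
  Matrix.of fun l ↦ Pi.single (e1 l) 1 - Pi.single (e2 l) (a l)

section GeneralizedIncidenceMatrix

variable {L N R K : Type*} [DecidableEq N] {e1 e2 : L → N}

theorem eq_generalizedIncidenceMatrix [Ring R] {a : L → R} {A : Matrix L N R}
    (hends : ∀ l, e1 l ≠ e2 l)
    (hA : ∀ l j, A l j = if j = e1 l then 1 else if j = e2 l then -(a l) else 0) :
    A = generalizedIncidenceMatrix e1 e2 a := by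
  ext l j
  rw [hA, generalizedIncidenceMatrix, Matrix.of_apply, Pi.sub_apply, Pi.single_apply,
    Pi.single_apply]
  rcases eq_or_ne j (e1 l) with rfl | hj
  · simp [hends l]
  · simp only [if_neg hj, zero_sub, neg_ite, neg_zero]

variable [Fintype N]

theorem generalizedIncidenceMatrix_mulVec_apply [Ring R] (a : L → R) (x : N → R) (l : L) :
    (generalizedIncidenceMatrix e1 e2 a *ᵥ x) l = x (e1 l) - a l * x (e2 l) := by
  change (Pi.single (e1 l) 1 - Pi.single (e2 l) (a l)) ⬝ᵥ x = _
  rw [sub_dotProduct, single_dotProduct, single_dotProduct, one_mul]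

theorem generalizedIncidenceMatrix_mulVec_eq_zero_iff [Ring R] {a : L → R} {x : N → R} :
    generalizedIncidenceMatrix e1 e2 a *ᵥ x = 0 ↔ ∀ l, x (e1 l) = a l * x (e2 l) := by
  simp only [funext_iff, generalizedIncidenceMatrix_mulVec_apply, Pi.zero_apply, sub_eq_zero]

theorem apply_eq_zero_iff_of_networkGraph_adj [Ring R] [NoZeroDivisors R] {a : L → R}
    (ha : ∀ l, a l ≠ 0) {x : N → R} (hx : generalizedIncidenceMatrix e1 e2 a *ᵥ x = 0)
    {i k : N} (hik : (networkGraph e1 e2).Adj i k) : x i = 0 ↔ x k = 0 := by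
  have hbranch (l : L) : x (e1 l) = 0 ↔ x (e2 l) = 0 := by
    rw [generalizedIncidenceMatrix_mulVec_eq_zero_iff.mp hx l, mul_eq_zero_iff_left (ha l)]
  obtain ⟨-, ⟨l, rfl, rfl⟩ | ⟨l, rfl, rfl⟩⟩ := hik
  · exact hbranch l
  · exact (hbranch l).symm

theorem eq_zero_of_generalizedIncidenceMatrix_mulVec_eq_zero_of_apply_eq_zero [Ring R]
    [NoZeroDivisors R] {a : L → R} (ha : ∀ l, a l ≠ 0)
    (hconn : (networkGraph e1 e2).Preconnected) {x : N → R}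
    (hx : generalizedIncidenceMatrix e1 e2 a *ᵥ x = 0) {i : N} (hi : x i = 0) : x = 0 := by
  ext k
  obtain ⟨p⟩ := hconn i k
  induction p with
  | nil => exact hi
  | cons hadj _ ih => exact ih ((apply_eq_zero_iff_of_networkGraph_adj ha hx hadj).mp hi)

theorem exists_ker_generalizedIncidenceMatrix_eq_span_singleton [Field K] [Fintype L] {a : L → K}
    (ha : ∀ l, a l ≠ 0) (hconn : (networkGraph e1 e2).Preconnected)
    (hcard : Fintype.card L < Fintype.card N) :
    ∃ v : N → K, (∀ i, v i ≠ 0) ∧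
      LinearMap.ker (generalizedIncidenceMatrix e1 e2 a).mulVecLin = Submodule.span K {v} := by
  have hzero : ∀ x ∈ LinearMap.ker (generalizedIncidenceMatrix e1 e2 a).mulVecLin,
      ∀ i, x i = 0 → x = 0 :=
    fun _ hx _ ↦
      eq_zero_of_generalizedIncidenceMatrix_mulVec_eq_zero_of_apply_eq_zero ha hconn hx
  have hker : LinearMap.ker (generalizedIncidenceMatrix e1 e2 a).mulVecLin ≠ ⊥ :=
    LinearMap.ker_ne_bot_of_finrank_lt (by simpa only [Module.finrank_fintype_fun_eq_card])
  obtain ⟨v, hv, hv0⟩ := Submodule.exists_mem_ne_zero_of_ne_bot hker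
  exact ⟨v, fun i hi ↦ hv0 (hzero v hv i hi), eq_span_singleton_of_apply_eq_zero_imp hzero hv hv0⟩

end GeneralizedIncidenceMatrix

theorem stmt6_general {K L N : Type*} [Field K] [Fintype L] [Fintype N] [DecidableEq N]
    (e1 e2 : L → N) (a : L → K) (ha : ∀ l, a l ≠ 0)
    (hconn : (networkGraph e1 e2).Connected)
    (hcard : Fintype.card L = Fintype.card N - 1) :
    (generalizedIncidenceMatrix e1 e2 a).rank = Fintype.card N - 1 ∧
    ∃ v : N → K, (∀ i, v i ≠ 0) ∧
      ∀ x : N → K, generalizedIncidenceMatrix e1 e2 a *ᵥ x = 0 ↔ ∃ c : K, x = c • v := by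
  have : Nonempty N := hconn.nonempty
  have hlt : Fintype.card L < Fintype.card N := hcard ▸ Nat.sub_one_lt Fintype.card_ne_zero
  obtain ⟨v, hv, hker⟩ :=
    exists_ker_generalizedIncidenceMatrix_eq_span_singleton ha hconn.preconnected hlt
  have hv0 : v ≠ 0 := fun h ↦ hv (Classical.arbitrary N) (congrFun h _)
  refine ⟨Nat.eq_sub_of_add_eq (rank_add_one_of_ker_mulVecLin_eq_span_singleton hv0 hker),
    v, hv, fun x ↦ ?_⟩
  rw [← Matrix.mulVecLin_apply, ← LinearMap.mem_ker, hker, Submodule.mem_span_singleton]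
  simp only [eq_comm]

/-- Let `A ∈ ℂ^{L×N}` be a generalized incidence matrix of a connected
network with `|L| = |N| - 1` (so the network graph is a tree). Then
`rank A = |N| - 1`, and `Null(A)` is one-dimensional, spanned by a vector all of whose
entries are nonzero. -/
theorem stmt6 {L N : Type*} [Fintype L] [Fintype N] [DecidableEq N]
    [Nonempty L] [Nonempty N]
    (e1 e2 : L → N) (a : L → ℂ)
    (hends : ∀ l, e1 l ≠ e2 l) (ha : ∀ l, a l ≠ 0)
    (A : Matrix L N ℂ)
    (hA : ∀ l j, A l j = if j = e1 l then 1 else if j = e2 l then -(a l) else 0)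
    (hconn : (SimpleGraph.fromRel fun i k => ∃ l, e1 l = i ∧ e2 l = k).Connected)
    (hcard : Fintype.card L = Fintype.card N - 1) :
    A.rank = Fintype.card N - 1 ∧
    ∃ v : N → ℂ, (∀ i, v i ≠ 0) ∧
      ∀ x : N → ℂ, A.mulVec x = 0 ↔ ∃ c : ℂ, x = c • v := by
  rw [eq_generalizedIncidenceMatrix hends hA]
  exact stmt6_general e1 e2 a ha hconn hcard
end

section
/- Let A ∈ ℂ^{L×N} be a generalized incidence matrix of a connected network, let y_L ∈ ℂ^L have all entries nonzero with Re(y_l) ≥ 0 for every branch l, let y_T ∈ ℂ^N satisfy Re(y_{T,i}) ≥ 0 for every node i, and let Y_N = Aᴴ diag(y_L) A + diag(y_T). Then for every v ∈ ℂ^N with Y_N v = 0: (a) (Av)_l = 0 for every branch l with Re(y_l) > 0; and (b) v_i = 0 for every node i such that either Re(y_{T,i}) > 0, or y_{T,i} ≠ 0 and i is not an endpoint of any branch l with Re(y_l) = 0. -/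
open Matrix

/-!
Pairing `Y_N v = 0` with `v` gives the power balance `∑ y_l |(A v)_l|² + ∑ y_{T,i} |v_i|² = 0`.
All terms of its real part are nonnegative, so each vanishes, which settles the branches and shunts
with positive real part. If no branch with `Re y_l = 0` meets `i`, then no branch current reaches
`i`, and row `i` of `Y_N v = 0` reduces to `y_{T,i} v_i = 0`.
-/

section WeightedSum

variable {ι E : Type*} [Fintype ι] {g : ι → ℝ}

theorem sum_mul_norm_sq_nonneg [Norm E] (hg : ∀ i, 0 ≤ g i) (w : ι → E) :
    0 ≤ ∑ i, g i * ‖w i‖ ^ 2 :=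
  Finset.sum_nonneg fun i _ => mul_nonneg (hg i) (sq_nonneg _)

theorem eq_zero_of_sum_mul_norm_sq_eq_zero [NormedAddGroup E] (hg : ∀ i, 0 ≤ g i)
    {w : ι → E} (hsum : ∑ i, g i * ‖w i‖ ^ 2 = 0) {i : ι} (hi : 0 < g i) : w i = 0 := by
  have hterm : g i * ‖w i‖ ^ 2 = 0 :=
    (Finset.sum_eq_zero_iff_of_nonneg fun j _ => mul_nonneg (hg j) (sq_nonneg _)).1 hsum i
      (Finset.mem_univ i)
  simpa [hi.ne'] using hterm

end WeightedSum

theorem diagonal_mulVec_eq_mul {ι R : Type*} [NonUnitalNonAssocSemiring R] [Fintype ι]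
    [DecidableEq ι] (d w : ι → R) : diagonal d *ᵥ w = d * w :=
  funext (mulVec_diagonal d w)

section Admittance

variable {𝕜 L N : Type*} [RCLike 𝕜] [Fintype L]

theorem re_star_dotProduct_mul (y w : L → 𝕜) :
    RCLike.re (star w ⬝ᵥ (y * w)) = ∑ l, RCLike.re (y l) * ‖w l‖ ^ 2 := by
  have hterm (l : L) : star (w l) * (y l * w l) = y l * ((‖w l‖ ^ 2 : ℝ) : 𝕜) := by
    rw [mul_left_comm, RCLike.star_def, RCLike.conj_mul, RCLike.ofReal_pow]
  simp only [dotProduct, Pi.star_apply, Pi.mul_apply, hterm, map_sum, RCLike.re_mul_ofReal]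

variable [DecidableEq L] [DecidableEq N]

/-- The admittance matrix `Y_N` of a network with branch admittances `yL` and shunt admittances
`yT`. The matrix `A`, which sends node voltages to branch voltages, is arbitrary. -/
def admittanceMatrix (A : Matrix L N 𝕜) (yL : L → 𝕜) (yT : N → 𝕜) : Matrix N N 𝕜 :=
  Aᴴ * diagonal yL * A + diagonal yT

variable [Fintype N]

theorem admittanceMatrix_mulVec (A : Matrix L N 𝕜) (yL : L → 𝕜) (yT v : N → 𝕜) :
    admittanceMatrix A yL yT *ᵥ v = Aᴴ *ᵥ (yL * (A *ᵥ v)) + yT * v := by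
  rw [admittanceMatrix, add_mulVec, ← mulVec_mulVec, ← mulVec_mulVec, diagonal_mulVec_eq_mul,
    diagonal_mulVec_eq_mul]

theorem re_star_dotProduct_admittanceMatrix_mulVec (A : Matrix L N 𝕜) (yL : L → 𝕜)
    (yT v : N → 𝕜) :
    RCLike.re (star v ⬝ᵥ (admittanceMatrix A yL yT *ᵥ v)) =
      ∑ l, RCLike.re (yL l) * ‖(A *ᵥ v) l‖ ^ 2 + ∑ i, RCLike.re (yT i) * ‖v i‖ ^ 2 := by
  rw [admittanceMatrix_mulVec, dotProduct_add, dotProduct_mulVec, ← star_mulVec, map_add,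
    re_star_dotProduct_mul, re_star_dotProduct_mul]

variable {A : Matrix L N 𝕜} {yL : L → 𝕜} {yT v : N → 𝕜}

theorem dissipation_eq_zero_of_admittanceMatrix_mulVec_eq_zero
    (hyL : ∀ l, 0 ≤ RCLike.re (yL l)) (hyT : ∀ i, 0 ≤ RCLike.re (yT i))
    (hv : admittanceMatrix A yL yT *ᵥ v = 0) :
    ∑ l, RCLike.re (yL l) * ‖(A *ᵥ v) l‖ ^ 2 = 0 ∧ ∑ i, RCLike.re (yT i) * ‖v i‖ ^ 2 = 0 := by
  rw [← add_eq_zero_iff_of_nonneg (sum_mul_norm_sq_nonneg hyL _) (sum_mul_norm_sq_nonneg hyT _),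
    ← re_star_dotProduct_admittanceMatrix_mulVec, hv, dotProduct_zero, map_zero]

theorem shunt_mul_eq_zero_of_admittanceMatrix_mulVec_eq_zero
    (hv : admittanceMatrix A yL yT *ᵥ v = 0) {i : N}
    (hi : ∀ l, A l i = 0 ∨ (A *ᵥ v) l = 0) : yT i * v i = 0 := by
  have hcurrent : (Aᴴ *ᵥ (yL * (A *ᵥ v))) i = 0 :=
    Finset.sum_eq_zero fun l _ => by rcases hi l with h | h <;> simp [h]
  have hrow := congrFun hv i
  rwa [admittanceMatrix_mulVec, Pi.add_apply, hcurrent, zero_add] at hrow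

end Admittance

theorem stmt10_general {𝕜 L N : Type*} [RCLike 𝕜] [Fintype L] [Fintype N] [DecidableEq L]
    [DecidableEq N] {A : Matrix L N 𝕜} {yL : L → 𝕜} {yT v : N → 𝕜}
    (hyL : ∀ l, 0 ≤ RCLike.re (yL l)) (hyT : ∀ i, 0 ≤ RCLike.re (yT i))
    (hv : admittanceMatrix A yL yT *ᵥ v = 0) :
    (∀ l, 0 < RCLike.re (yL l) → (A *ᵥ v) l = 0) ∧
    (∀ i, (0 < RCLike.re (yT i) ∨ (yT i ≠ 0 ∧ ∀ l, RCLike.re (yL l) = 0 → A l i = 0)) →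
      v i = 0) := by
  obtain ⟨hbranch, hshunt⟩ := dissipation_eq_zero_of_admittanceMatrix_mulVec_eq_zero hyL hyT hv
  have hlossy (l : L) : 0 < RCLike.re (yL l) → (A *ᵥ v) l = 0 :=
    eq_zero_of_sum_mul_norm_sq_eq_zero hyL hbranch
  refine ⟨hlossy, ?_⟩
  rintro i (hpos | ⟨hne, hlossless⟩)
  · exact eq_zero_of_sum_mul_norm_sq_eq_zero hyT hshunt hpos
  · have hmul : yT i * v i = 0 := shunt_mul_eq_zero_of_admittanceMatrix_mulVec_eq_zero hv fun l =>
      (hyL l).eq_or_lt.imp (fun h => hlossless l h.symm) (hlossy l)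
    exact (mul_eq_zero.1 hmul).resolve_left hne

/-- Let `A ∈ ℂ^{L×N}` be a generalized incidence matrix of a connected
network, `y_L ∈ ℂ^L` with all entries nonzero and `Re (y_L l) ≥ 0`, `y_T ∈ ℂ^N` with
`Re (y_T i) ≥ 0`, and `Y_N = Aᴴ diag(y_L) A + diag(y_T)`. Then for every `v` with
`Y_N v = 0`: (a) `(A v)_l = 0` for every branch `l` with `Re (y_L l) > 0`; and
(b) `v_i = 0` for every node `i` such that either `Re (y_T i) > 0`, or `y_T i ≠ 0` and
`i` is not an endpoint of any branch `l` with `Re (y_L l) = 0`. -/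
theorem stmt10 {L N : Type*} [Fintype L] [Fintype N] [DecidableEq N] [DecidableEq L]
    [Nonempty L] [Nonempty N]
    (e1 e2 : L → N) (a : L → ℂ)
    (hends : ∀ l, e1 l ≠ e2 l) (ha : ∀ l, a l ≠ 0)
    (A : Matrix L N ℂ)
    (hA : ∀ l j, A l j = if j = e1 l then 1 else if j = e2 l then -(a l) else 0)
    (hconn : (SimpleGraph.fromRel fun i k => ∃ l, e1 l = i ∧ e2 l = k).Connected)
    (yL : L → ℂ) (hyL : ∀ l, yL l ≠ 0) (hyLre : ∀ l, 0 ≤ (yL l).re)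
    (yT : N → ℂ) (hyTre : ∀ i, 0 ≤ (yT i).re) :
    ∀ v : N → ℂ,
      (Aᴴ * Matrix.diagonal yL * A + Matrix.diagonal yT).mulVec v = 0 →
      (∀ l, 0 < (yL l).re → A.mulVec v l = 0) ∧
      (∀ i, (0 < (yT i).re ∨
          (yT i ≠ 0 ∧ ¬∃ l, (yL l).re = 0 ∧ (e1 l = i ∨ e2 l = i))) → v i = 0) := by
  intro v hv
  have hentry (l : L) (i : N) (hi : ¬(e1 l = i ∨ e2 l = i)) : A l i = 0 := by grind
  exact (stmt10_general hyLre hyTre hv).imp_right fun hnode i hi => hnode i <| hi.imp_right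
    fun ⟨hne, hfar⟩ => ⟨hne, fun l hl => hentry l i fun hend => hfar ⟨l, hl, hend⟩⟩
end

section
/- Let A ∈ ℂ^{L×N} be a generalized incidence matrix whose underlying simple graph on N (obtained by collapsing parallel branches) is a tree, let y_L ∈ ℂ^L have all entries nonzero, let y_T ∈ ℂ^N, and let Y_N = Aᴴ diag(y_L) A + diag(y_T). Fix a root node r ∈ N, orienting the tree so that every node n ≠ r has a unique parent p(n) and a set of children. For adjacent nodes p, n, let Y^{p,n} be the 2×2 matrix (with rows/columns ordered (p, n)) given by Y^{p,n} = Σ_l y_l · w_l w_lᴴ, summed over all branches l whose endpoints are p and n, where w_l ∈ ℂ^2 is the restriction of the conjugate of row l of A to the coordinates (p, n); write its entries y^{p,n}_{11}, y^{p,n}_{12}, y^{p,n}_{21}, y^{p,n}_{22}. Define, by recursion from the leaves upward: y^{sb}_n = y_{T,n} + Σ_{c child of n} y^b_c for every node n, and, for every node n ≠ r with parent p = p(n), y^b_n = y^{p,n}_{11} − y^{p,n}_{12} y^{p,n}_{21} / (y^{p,n}_{22} + y^{sb}_n). Assume that y^{p(n),n}_{22} + y^{sb}_n ≠ 0 for every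 node n ≠ r, and that y^{sb}_r ≠ 0. Then Null(Y_N) = {0}; in particular Null(Y_N) ⊆ Null(A) and Y_N is invertible. -/
open Matrix

/-! A kernel vector `v` satisfies a current balance at every node: the current into the branches
towards the parent, the currents into the branches towards the children, and the shunt current sum
to zero. Eliminating the nodes from the leaves upward is a sequence of `2 × 2` Schur complements,
after which the subtree below `n` acts on its parent branches as a single shunt `ysb n`, so that
`Y₂₁ v (p n) + (Y₂₂ + ysb n) v n = 0`. At the root there are no parent branches and this reads
`ysb r * v r = 0`; the nonzero pivots then propagate `v = 0` from the root back to the leaves. -/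

theorem wellFounded_of_wellFounded_swap {α : Type*} [Finite α] {s : α → α → Prop}
    (hs : WellFounded (Function.swap s)) : WellFounded s := by
  have : Std.Irrefl (Relation.TransGen s) :=
    ⟨fun a ha => hs.transGen.irrefl.irrefl a (Relation.transGen_swap.2 ha)⟩
  exact Subrelation.wf Relation.TransGen.single
    (Finite.wellFounded_of_trans_of_irrefl (Relation.TransGen s))

section RootedTree

variable {N : Type*} {r : N} {p : N → N}

/-- `p` is the parent map of a tree with root `r`. The root has no parent; by convention `p` fixes
it, and iterating `p` from any node leads to it. -/
structure IsParentMap (r : N) (p : N → N) : Prop where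
  map_root : p r = r
  exists_iterate_eq_root : ∀ n, ∃ m : ℕ, p^[m] n = r

/-- `c` is a child of `n` in the tree with root `r` and parent map `p`. The condition `c ≠ r` keeps
the root, which is its own image under `p`, from being its own child. -/
abbrev IsChild (r : N) (p : N → N) (c n : N) : Prop :=
  c ≠ r ∧ p c = n

namespace IsParentMap

theorem induction_from_root (hp : IsParentMap r p) {P : N → Prop} (root : P r)
    (step : ∀ n, n ≠ r → P (p n) → P n) (n : N) : P n := by
  obtain ⟨m, hm⟩ := hp.exists_iterate_eq_root n
  induction m generalizing n with
  | zero => rwa [show n = r from hm]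
  | succ m ih =>
    by_cases hn : n = r
    · exact hn ▸ root
    · exact step n hn (ih (p n) hm)

theorem wellFounded_swap_isChild (hp : IsParentMap r p) :
    WellFounded (Function.swap (IsChild r p)) :=
  ⟨hp.induction_from_root
    (Acc.intro r fun _ h => absurd rfl h.1)
    fun n _ acc_parent => Acc.intro n fun _ h => h.2 ▸ acc_parent⟩

theorem wellFounded_isChild [Finite N] (hp : IsParentMap r p) : WellFounded (IsChild r p) :=
  wellFounded_of_wellFounded_swap hp.wellFounded_swap_isChild

theorem ne_of_isChild_or_isChild (hp : IsParentMap r p) {m n : N}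
    (h : IsChild r p m n ∨ IsChild r p n m) : m ≠ n := by
  rintro rfl
  exact hp.wellFounded_swap_isChild.asymmetric _ _ (or_self_iff.1 h) (or_self_iff.1 h)

theorem not_isChild_parent (hp : IsParentMap r p) {n : N} : ¬ IsChild r p (p n) n := by
  rintro ⟨hroot, hcycle⟩
  have hn : n ≠ r := fun hn => hroot (hn ▸ hp.map_root)
  exact hp.wellFounded_swap_isChild.asymmetric _ _ ⟨hroot, hcycle⟩ ⟨hn, rfl⟩

end IsParentMap

end RootedTree

section TwoPort

variable {K : Type*} [Field K]

/-- The admittance seen at the first port of the two-port with admittance matrix `E` when its second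
port is terminated by the shunt admittance `s`. It is the Schur complement of `E 1 1 + s`, and
meaningful only when that pivot is nonzero. -/
def inputAdmittance (E : Matrix (Fin 2) (Fin 2) K) (s : K) : K :=
  E 0 0 - E 0 1 * E 1 0 / (E 1 1 + s)

theorem mulVec_zero_eq_inputAdmittance_mul {E : Matrix (Fin 2) (Fin 2) K} {s x u : K}
    (hpivot : E 1 1 + s ≠ 0) (hload : (E *ᵥ ![x, u]) 1 + s * u = 0) :
    (E *ᵥ ![x, u]) 0 = inputAdmittance E s * x := by
  simp only [mulVec, dotProduct, Fin.sum_univ_two, cons_val_zero, cons_val_one] at hload ⊢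
  unfold inputAdmittance
  field_simp
  linear_combination E 0 1 * hload

end TwoPort

section TreeElimination

variable {K N : Type*} [Field K] {r : N} {p : N → N}
  {E : N → N → Matrix (Fin 2) (Fin 2) K} {yT ysb yb v : N → K}

theorem parent_current_add_subtree_current_eq_zero [Fintype N] [DecidableEq N]
    (hp : IsParentMap r p)
    (hbalance : ∀ n, (E (p n) n *ᵥ ![v (p n), v n]) 1
      + ∑ c with IsChild r p c n, (E n c *ᵥ ![v n, v c]) 0 + yT n * v n = 0)
    (hysb : ∀ n, ysb n = yT n + ∑ c with IsChild r p c n, yb c)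
    (hyb : ∀ n, n ≠ r → yb n = inputAdmittance (E (p n) n) (ysb n))
    (hpivot : ∀ n, n ≠ r → E (p n) n 1 1 + ysb n ≠ 0) (n : N) :
    (E (p n) n *ᵥ ![v (p n), v n]) 1 + ysb n * v n = 0 := by
  induction n using hp.wellFounded_isChild.induction with | _ n ih
  have children_current : ∑ c with IsChild r p c n, (E n c *ᵥ ![v n, v c]) 0
      = (∑ c with IsChild r p c n, yb c) * v n := by
    rw [Finset.sum_mul]
    refine Finset.sum_congr rfl fun c hc => ?_
    obtain ⟨hcr, rfl⟩ := (Finset.mem_filter.1 hc).2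
    rw [hyb c hcr]
    exact mulVec_zero_eq_inputAdmittance_mul (hpivot c hcr) (ih c ⟨hcr, rfl⟩)
  rw [hysb n]
  linear_combination hbalance n - children_current

theorem eq_zero_of_parent_current_add_subtree_current_eq_zero (hp : IsParentMap r p)
    (hcurrent : ∀ n, (E (p n) n *ᵥ ![v (p n), v n]) 1 + ysb n * v n = 0)
    (hpivot : ∀ n, n ≠ r → E (p n) n 1 1 + ysb n ≠ 0) (hroot : ysb r ≠ 0) (hE : E r r = 0) :
    v = 0 := by
  have root_eq_zero : v r = 0 := by
    have := hcurrent r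
    rw [hp.map_root, hE, zero_mulVec, Pi.zero_apply, zero_add] at this
    exact (mul_eq_zero.1 this).resolve_left hroot
  refine funext fun n => hp.induction_from_root (P := fun n => v n = 0) root_eq_zero ?_ n
  intro n hn parent_eq_zero
  have pivot_mul : (E (p n) n 1 1 + ysb n) * v n = 0 := by
    have := hcurrent n
    simp only [mulVec, dotProduct, Fin.sum_univ_two, cons_val_zero, cons_val_one,
      parent_eq_zero] at this
    linear_combination this
  exact (mul_eq_zero.1 pivot_mul).resolve_left (hpivot n hn)

end TreeElimination

section Branches

variable {L N : Type*} [Fintype L] [DecidableEq N] {e₁ e₂ : L → N}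

/-- The parallel branches joining `q` and `n`, in either orientation, where branch `l` has endpoints
`e₁ l` and `e₂ l`. -/
def branchesBetween (e₁ e₂ : L → N) (q n : N) : Finset L :=
  Finset.univ.filter fun l => (e₁ l = q ∧ e₂ l = n) ∨ (e₁ l = n ∧ e₂ l = q)

theorem mem_branchesBetween {q n : N} {l : L} :
    l ∈ branchesBetween e₁ e₂ q n ↔ (e₁ l = q ∧ e₂ l = n) ∨ (e₁ l = n ∧ e₂ l = q) := by
  simp [branchesBetween]

theorem branchesBetween_self (hloop : ∀ l, e₁ l ≠ e₂ l) (n : N) :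
    branchesBetween e₁ e₂ n n = ∅ := by
  refine Finset.eq_empty_of_forall_notMem fun l hl => hloop l ?_
  grind [mem_branchesBetween]

theorem pairwise_disjoint_branchesBetween (n : N) :
    Pairwise (Function.onFun Disjoint (branchesBetween e₁ e₂ n)) := by
  intro c c' hcc'
  refine Finset.disjoint_left.2 fun l hl hl' => hcc' ?_
  grind [mem_branchesBetween]

variable {r : N} {p : N → N}

theorem disjoint_branchesBetween_parent_child (hp : IsParentMap r p) {c n : N}
    (hc : IsChild r p c n) :
    Disjoint (branchesBetween e₁ e₂ (p n) n) (branchesBetween e₁ e₂ n c) := by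
  refine Finset.disjoint_left.2 fun l hparent hchild => ?_
  have hcn : c = p n := by grind [mem_branchesBetween]
  exact hp.not_isChild_parent (hcn ▸ hc)

theorem mem_branchesBetween_parent_or_child {l : L} {n : N}
    (hl : IsChild r p (e₁ l) (e₂ l) ∨ IsChild r p (e₂ l) (e₁ l)) (hn : n = e₁ l ∨ n = e₂ l) :
    l ∈ branchesBetween e₁ e₂ (p n) n ∨ ∃ c, IsChild r p c n ∧ l ∈ branchesBetween e₁ e₂ n c := by
  simp only [mem_branchesBetween]
  grind

theorem sum_eq_sum_parent_add_sum_children [Fintype N] {M : Type*} [AddCommMonoid M]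
    (hp : IsParentMap r p)
    (hbranch : ∀ l, IsChild r p (e₁ l) (e₂ l) ∨ IsChild r p (e₂ l) (e₁ l)) (n : N) {f : L → M}
    (hf : ∀ l, n ≠ e₁ l → n ≠ e₂ l → f l = 0) :
    ∑ l, f l = ∑ l ∈ branchesBetween e₁ e₂ (p n) n, f l
      + ∑ c with IsChild r p c n, ∑ l ∈ branchesBetween e₁ e₂ n c, f l := by
  classical
  have hdisj : Disjoint (branchesBetween e₁ e₂ (p n) n)
      (({c | IsChild r p c n} : Finset N).biUnion (branchesBetween e₁ e₂ n)) :=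
    (Finset.disjoint_biUnion_right _ _ _).2 fun c hc =>
      disjoint_branchesBetween_parent_child hp (Finset.mem_filter.1 hc).2
  rw [← Finset.sum_biUnion ((pairwise_disjoint_branchesBetween n).set_pairwise _),
    ← Finset.sum_union hdisj]
  refine (Finset.sum_subset (Finset.subset_univ _) fun l _ hl => ?_).symm
  have hn : ¬(n = e₁ l ∨ n = e₂ l) := fun hn => hl <| by
    simpa only [Finset.mem_union, Finset.mem_biUnion, Finset.mem_filter, Finset.mem_univ, true_and]
      using mem_branchesBetween_parent_or_child (hbranch l) hn
  exact hf l (fun h => hn (.inl h)) (fun h => hn (.inr h))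

end Branches

section AdmittanceMatrix

variable {K L N : Type*} [CommSemiring K] [Fintype L] [DecidableEq N]
  {e₁ e₂ : L → N} {B : Matrix N L K} {A : Matrix L N K} {y : L → K}

/-- The `2 × 2` admittance matrix of the parallel branches joining `q` and `n`, i.e. the
contribution of these branches to rows and columns `(q, n)` of `B * diagonal y * A`. The matrix
`Y^{q,n}` of a generalized incidence matrix `A` is the case `B = Aᴴ`. -/
def edgeBlock (B : Matrix N L K) (A : Matrix L N K) (y : L → K) (e₁ e₂ : L → N) (q n : N) :
    Matrix (Fin 2) (Fin 2) K :=
  ∑ l ∈ branchesBetween e₁ e₂ q n, y l • vecMulVec ![B q l, B n l] ![A l q, A l n]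

theorem edgeBlock_self (hloop : ∀ l, e₁ l ≠ e₂ l) (n : N) : edgeBlock B A y e₁ e₂ n n = 0 := by
  rw [edgeBlock, branchesBetween_self hloop, Finset.sum_empty]

variable [Fintype N]

theorem mulVec_apply_of_mem_branchesBetween (hloop : ∀ l, e₁ l ≠ e₂ l)
    (hA : ∀ l n, n ≠ e₁ l → n ≠ e₂ l → A l n = 0) (v : N → K) {q n : N} {l : L}
    (hl : l ∈ branchesBetween e₁ e₂ q n) : (A *ᵥ v) l = A l q * v q + A l n * v n := by
  have hqn : q ≠ n := by grind [mem_branchesBetween]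
  simp only [mulVec, dotProduct]
  refine Fintype.sum_eq_add q n hqn fun m hm => ?_
  have hAm : A l m = 0 := by grind [mem_branchesBetween]
  rw [hAm, zero_mul]

theorem edgeBlock_mulVec (hloop : ∀ l, e₁ l ≠ e₂ l)
    (hA : ∀ l n, n ≠ e₁ l → n ≠ e₂ l → A l n = 0) (v : N → K) (q n : N) :
    edgeBlock B A y e₁ e₂ q n *ᵥ ![v q, v n]
      = ∑ l ∈ branchesBetween e₁ e₂ q n, (y l * (A *ᵥ v) l) • ![B q l, B n l] := by
  rw [edgeBlock, sum_mulVec]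
  refine Finset.sum_congr rfl fun l hl => ?_
  rw [mulVec_apply_of_mem_branchesBetween hloop hA v hl, smul_mulVec, vecMulVec_mulVec,
    mul_smul]
  simp [dotProduct, Fin.sum_univ_two, mul_comm]

theorem mul_diagonal_mul_mulVec_apply [DecidableEq L] {r : N} {p : N → N}
    (hp : IsParentMap r p)
    (hbranch : ∀ l, IsChild r p (e₁ l) (e₂ l) ∨ IsChild r p (e₂ l) (e₁ l))
    (hB : ∀ l n, n ≠ e₁ l → n ≠ e₂ l → B n l = 0) (hA : ∀ l n, n ≠ e₁ l → n ≠ e₂ l → A l n = 0)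
    (v : N → K) (n : N) :
    ((B * diagonal y * A) *ᵥ v) n = (edgeBlock B A y e₁ e₂ (p n) n *ᵥ ![v (p n), v n]) 1
      + ∑ c with IsChild r p c n, (edgeBlock B A y e₁ e₂ n c *ᵥ ![v n, v c]) 0 := by
  have hloop (l : L) : e₁ l ≠ e₂ l := hp.ne_of_isChild_or_isChild (hbranch l)
  calc ((B * diagonal y * A) *ᵥ v) n = ∑ l, y l * (A *ᵥ v) l * B n l := by
        rw [← mulVec_mulVec, mulVec, dotProduct]
        exact Finset.sum_congr rfl fun l _ => by rw [mul_diagonal, mul_assoc, mul_comm]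
    _ = ∑ l ∈ branchesBetween e₁ e₂ (p n) n, y l * (A *ᵥ v) l * B n l
        + ∑ c with IsChild r p c n, ∑ l ∈ branchesBetween e₁ e₂ n c, y l * (A *ᵥ v) l * B n l :=
      sum_eq_sum_parent_add_sum_children hp hbranch n fun l h₁ h₂ => by rw [hB l n h₁ h₂, mul_zero]
    _ = _ := by
      simp only [edgeBlock_mulVec hloop hA, Finset.sum_apply, Pi.smul_apply, cons_val_zero,
        cons_val_one, smul_eq_mul]

end AdmittanceMatrix

theorem stmt12_general {K L N : Type*} [Field K] [Fintype L] [Fintype N] [DecidableEq N]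
    [DecidableEq L] (e₁ e₂ : L → N) (B : Matrix N L K) (A : Matrix L N K)
    (hB : ∀ l n, n ≠ e₁ l → n ≠ e₂ l → B n l = 0) (hA : ∀ l n, n ≠ e₁ l → n ≠ e₂ l → A l n = 0)
    (y : L → K) (yT : N → K) (r : N) (p : N → N) (hp : IsParentMap r p)
    (hbranch : ∀ l, IsChild r p (e₁ l) (e₂ l) ∨ IsChild r p (e₂ l) (e₁ l))
    (ysb yb : N → K) (hysb : ∀ n, ysb n = yT n + ∑ c with IsChild r p c n, yb c)
    (hyb : ∀ n, n ≠ r → yb n = inputAdmittance (edgeBlock B A y e₁ e₂ (p n) n) (ysb n))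
    (hpivot : ∀ n, n ≠ r → edgeBlock B A y e₁ e₂ (p n) n 1 1 + ysb n ≠ 0) (hroot : ysb r ≠ 0)
    (v : N → K) (hv : (B * diagonal y * A + diagonal yT) *ᵥ v = 0) : v = 0 := by
  have hbalance (n : N) : (edgeBlock B A y e₁ e₂ (p n) n *ᵥ ![v (p n), v n]) 1
      + ∑ c with IsChild r p c n, (edgeBlock B A y e₁ e₂ n c *ᵥ ![v n, v c]) 0
      + yT n * v n = 0 := by
    rw [← mul_diagonal_mul_mulVec_apply hp hbranch hB hA, ← mulVec_diagonal, ← Pi.add_apply,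
      ← add_mulVec, hv, Pi.zero_apply]
  have hcurrent := parent_current_add_subtree_current_eq_zero hp hbalance hysb hyb hpivot
  have hloop (l : L) : e₁ l ≠ e₂ l := hp.ne_of_isChild_or_isChild (hbranch l)
  exact eq_zero_of_parent_current_add_subtree_current_eq_zero hp hcurrent hpivot hroot
    (edgeBlock_self hloop r)

/-- Theorem 3, Condition 1. Let `A ∈ ℂ^{L×N}` be a generalized
incidence matrix whose underlying simple graph is a tree, rooted at `r` with parent map
`p` (every branch joins a non-root node to its parent, every non-root node is adjacent
to its parent, and iterating `p` reaches the root). For adjacent nodes `q, n`, the `2×2`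
matrix `Y^{q,n} = Σ_l y_l · w_l w_lᴴ` sums over all branches with endpoints `q` and `n`,
where `w_l` is the restriction of the conjugate of row `l` of `A` to coordinates
`(q, n)`. Given `ysb` and `yb` satisfying the leaves-upward recursion
`ysb n = y_{T,n} + Σ_{c child of n} yb c` and, for `n ≠ r` with parent `p n`,
`yb n = Y^{pn,n}₁₁ − Y^{pn,n}₁₂ Y^{pn,n}₂₁ / (Y^{pn,n}₂₂ + ysb n)`, if
`Y^{p n,n}₂₂ + ysb n ≠ 0` for every `n ≠ r` and `ysb r ≠ 0`, then `Null(Y_N) = {0}`,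
where `Y_N = Aᴴ diag(y_L) A + diag(y_T)`. -/
theorem stmt12 {L N : Type*} [Fintype L] [Fintype N] [DecidableEq N] [DecidableEq L]
    [Nonempty L] [Nonempty N]
    (e1 e2 : L → N) (a : L → ℂ)
    (hends : ∀ l, e1 l ≠ e2 l) (ha : ∀ l, a l ≠ 0)
    (A : Matrix L N ℂ)
    (hA : ∀ l j, A l j = if j = e1 l then 1 else if j = e2 l then -(a l) else 0)
    (yL : L → ℂ) (hyL : ∀ l, yL l ≠ 0) (yT : N → ℂ)
    (r : N) (p : N → N)
    (hpr : p r = r)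
    (hreach : ∀ n, ∃ m : ℕ, p^[m] n = r)
    (hadj : ∀ n, n ≠ r → ∃ l, (e1 l = n ∧ e2 l = p n) ∨ (e1 l = p n ∧ e2 l = n))
    (hbranch : ∀ l, (e1 l ≠ r ∧ p (e1 l) = e2 l) ∨ (e2 l ≠ r ∧ p (e2 l) = e1 l))
    (Ypn : N → N → Matrix (Fin 2) (Fin 2) ℂ)
    (hYpn : ∀ q n, Ypn q n = ∑ l ∈ Finset.univ.filter
        (fun l => (e1 l = q ∧ e2 l = n) ∨ (e1 l = n ∧ e2 l = q)),
        yL l • Matrix.vecMulVec ![star (A l q), star (A l n)] ![A l q, A l n])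
    (ysb yb : N → ℂ)
    (hysb : ∀ n, ysb n = yT n + ∑ c ∈ Finset.univ.filter (fun c => c ≠ r ∧ p c = n), yb c)
    (hyb : ∀ n, n ≠ r →
      yb n = Ypn (p n) n 0 0 - Ypn (p n) n 0 1 * Ypn (p n) n 1 0 / (Ypn (p n) n 1 1 + ysb n))
    (hdenom : ∀ n, n ≠ r → Ypn (p n) n 1 1 + ysb n ≠ 0)
    (hroot : ysb r ≠ 0) :
    ∀ v : N → ℂ,
      (Aᴴ * Matrix.diagonal yL * A + Matrix.diagonal yT).mulVec v = 0 → v = 0 := by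
  have hsupp (l : L) (n : N) (h₁ : n ≠ e1 l) (h₂ : n ≠ e2 l) : A l n = 0 := by simp [hA, h₁, h₂]
  obtain rfl : Ypn = edgeBlock Aᴴ A yL e1 e2 := funext₂ hYpn
  exact stmt12_general e1 e2 Aᴴ A (fun l n h₁ h₂ => by simp [hsupp l n h₁ h₂]) hsupp yL yT r p
    ⟨hpr, hreach⟩ hbranch ysb yb hysb hyb hdenom hroot
end

section
/- Let A ∈ ℂ^{L×N} be a generalized incidence matrix of a connected network, and suppose there exists k ∈ {1, −1} such that every branch admittance has the form y_l = i·k·b_l with b_l > 0 real, and every shunt admittance has the form y_{T,j} = i·k·c_j with c_j ≥ 0 real (i.e., the network consists only of inductors, or only of capacitors). Let Y_N = Aᴴ diag(y_L) A + diag(y_T). Then Null(Y_N) ⊆ Null(A). -/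
open Matrix

/-!
For `v` in the kernel of `Y_N`, the complex power `vᴴ Y_N v = ∑ y_l |(A v)_l|² + ∑ y_{T,j} |v_j|²`
vanishes. If a rotation of the complex plane brings all `y_l` into the open right half-plane and all
`y_{T,j}` into the closed one, then the real part of the rotated power is a sum of nonnegative terms
in which every `|(A v)_l|²` has a positive weight, so `A v = 0`. For purely reactive networks of one
kind, multiplication by `-i k` is such a rotation.
-/

theorem star_dotProduct_conjTranspose_mul_mul_add_mulVec {m n R : Type*} [Fintype m] [Fintype n]
    [NonUnitalSemiring R] [StarRing R] (A : Matrix m n R) (B : Matrix m m R) (C : Matrix n n R)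
    (v : n → R) :
    star v ⬝ᵥ (Aᴴ * B * A + C) *ᵥ v = star (A *ᵥ v) ⬝ᵥ B *ᵥ (A *ᵥ v) + star v ⬝ᵥ C *ᵥ v := by
  rw [add_mulVec, dotProduct_add, star_mulVec, ← dotProduct_mulVec, mulVec_mulVec, mulVec_mulVec,
    Matrix.mul_assoc]

section RCLike

variable {m n 𝕜 : Type*} [Fintype m] [Fintype n] [RCLike 𝕜]

theorem mulVec_eq_zero_of_conjTranspose_mul_mul_add_mulVec_eq_zero {A : Matrix m n 𝕜}
    {B : Matrix m m 𝕜} {C : Matrix n n 𝕜} (z : 𝕜)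
    (hB : ∀ w, w ≠ 0 → 0 < RCLike.re (z * (star w ⬝ᵥ B *ᵥ w)))
    (hC : ∀ v, 0 ≤ RCLike.re (z * (star v ⬝ᵥ C *ᵥ v)))
    {v : n → 𝕜} (hv : (Aᴴ * B * A + C) *ᵥ v = 0) : A *ᵥ v = 0 := by
  have power_eq_zero : RCLike.re (z * (star (A *ᵥ v) ⬝ᵥ B *ᵥ (A *ᵥ v))) +
      RCLike.re (z * (star v ⬝ᵥ C *ᵥ v)) = 0 := by
    rw [← map_add, ← mul_add, ← star_dotProduct_conjTranspose_mul_mul_add_mulVec, hv,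
      dotProduct_zero, mul_zero, map_zero]
  by_contra hAv
  exact (add_pos_of_pos_of_nonneg (hB _ hAv) (hC v)).ne' power_eq_zero

variable [DecidableEq n]

theorem re_mul_star_dotProduct_diagonal_mulVec (z : 𝕜) (y w : n → 𝕜) :
    RCLike.re (z * (star w ⬝ᵥ diagonal y *ᵥ w)) = ∑ i, RCLike.re (z * y i) * ‖w i‖ ^ 2 := by
  simp only [dotProduct, mulVec_diagonal, Finset.mul_sum, map_sum]
  refine Finset.sum_congr rfl fun i _ => ?_
  calc RCLike.re (z * (star (w i) * (y i * w i)))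
      = RCLike.re (z * y i * (star (w i) * w i)) := by ring_nf
    _ = RCLike.re (z * y i) * ‖w i‖ ^ 2 := by
      rw [RCLike.star_def, RCLike.conj_mul, ← RCLike.ofReal_pow, RCLike.re_mul_ofReal]

theorem re_mul_star_dotProduct_diagonal_mulVec_nonneg {z : 𝕜} {y : n → 𝕜}
    (hy : ∀ i, 0 ≤ RCLike.re (z * y i)) (w : n → 𝕜) :
    0 ≤ RCLike.re (z * (star w ⬝ᵥ diagonal y *ᵥ w)) := by
  rw [re_mul_star_dotProduct_diagonal_mulVec]
  exact Finset.sum_nonneg fun i _ => mul_nonneg (hy i) (sq_nonneg _)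

theorem re_mul_star_dotProduct_diagonal_mulVec_pos {z : 𝕜} {y : n → 𝕜}
    (hy : ∀ i, 0 < RCLike.re (z * y i)) {w : n → 𝕜} (hw : w ≠ 0) :
    0 < RCLike.re (z * (star w ⬝ᵥ diagonal y *ᵥ w)) := by
  obtain ⟨i, hi⟩ := Function.ne_iff.mp hw
  rw [re_mul_star_dotProduct_diagonal_mulVec]
  exact Finset.sum_pos' (fun j _ => mul_nonneg (hy j).le (sq_nonneg _))
    ⟨i, Finset.mem_univ i, mul_pos (hy i) (pow_pos (norm_pos_iff.mpr hi) 2)⟩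

theorem stmt14_general [DecidableEq m] (A : Matrix m n 𝕜) (yL : m → 𝕜) (yT : n → 𝕜) (z : 𝕜)
    (hyL : ∀ l, 0 < RCLike.re (z * yL l)) (hyT : ∀ j, 0 ≤ RCLike.re (z * yT j))
    (v : n → 𝕜) (hv : (Aᴴ * diagonal yL * A + diagonal yT) *ᵥ v = 0) : A *ᵥ v = 0 :=
  mulVec_eq_zero_of_conjTranspose_mul_mul_add_mulVec_eq_zero z
    (fun _ => re_mul_star_dotProduct_diagonal_mulVec_pos hyL)
    (re_mul_star_dotProduct_diagonal_mulVec_nonneg hyT) hv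

end RCLike

theorem re_neg_I_mul_mul_I_mul (k x : ℝ) :
    RCLike.re (-Complex.I * k * (Complex.I * k * x)) = k ^ 2 * x := by
  simp [sq, mul_assoc]

/-- Theorem 3, Condition 3. Let `A ∈ ℂ^{L×N}` be a generalized
incidence matrix of a connected network, and suppose there is `k ∈ {1, -1}` such that
every branch admittance is `y_l = i k b_l` with real `b_l > 0` and every shunt
admittance is `y_{T,j} = i k c_j` with real `c_j ≥ 0` (only inductors, or only
capacitors). Let `Y_N = Aᴴ diag(y_L) A + diag(y_T)`. Then `Null(Y_N) ⊆ Null(A)`. -/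
theorem stmt14 {L N : Type*} [Fintype L] [Fintype N] [DecidableEq N] [DecidableEq L]
    [Nonempty L] [Nonempty N]
    (e1 e2 : L → N) (a : L → ℂ)
    (hends : ∀ l, e1 l ≠ e2 l) (ha : ∀ l, a l ≠ 0)
    (A : Matrix L N ℂ)
    (hA : ∀ l j, A l j = if j = e1 l then 1 else if j = e2 l then -(a l) else 0)
    (hconn : (SimpleGraph.fromRel fun i k => ∃ l, e1 l = i ∧ e2 l = k).Connected)
    (yL : L → ℂ) (yT : N → ℂ) (k : ℝ) (hk : k = 1 ∨ k = -1)
    (b : L → ℝ) (hb : ∀ l, 0 < b l) (hyL : ∀ l, yL l = Complex.I * k * b l)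
    (c : N → ℝ) (hc : ∀ j, 0 ≤ c j) (hyT : ∀ j, yT j = Complex.I * k * c j) :
    ∀ v : N → ℂ,
      (Aᴴ * Matrix.diagonal yL * A + Matrix.diagonal yT).mulVec v = 0 →
      A.mulVec v = 0 := by
  have hk_sq : k ^ 2 = 1 := sq_eq_one_iff.mpr hk
  exact stmt14_general A yL yT (-Complex.I * k)
    (fun l => by simpa only [hyL, re_neg_I_mul_mul_I_mul, hk_sq, one_mul] using hb l)
    (fun j => by simpa only [hyT, re_neg_I_mul_mul_I_mul, hk_sq, one_mul] using hc j)
end
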